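/- Assume λ₂ > 0, X_i ≠ 0 for every column i, and ε > 0 satisfies ε < p λ₁ (‖X_i‖_r/(q λ₁))^{q/(q−1)} for every i. Let (β^k)_{k≥0} be a sequence in ℝ^p such that for every k, β^{k+1} is a global minimizer of G_{w(β^k)}. If β̄ ∈ ℝ^p is the limit of some subsequence β^{k_j} → β̄ (with k_j strictly increasing), then β̄ is a generalized first-order stationary point of F, and for every i with β̄_i ≠ 0 one has |β̄_i| > (q λ₁ / ‖X_i‖_r)^{1/(1−q)}. -/

import Mathlib

/-- Index for the ℓ_r norm with r ∈ {1, 2, ∞}. -/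
inductive LrIndex : Type
  | one | two | inf

/-- The ℓ_r norm on ℝ^n for r ∈ {1, 2, ∞}. -/
noncomputable def lrNorm {n : ℕ} (r : LrIndex) (z : Fin n → ℝ) : ℝ :=
  match r with
  | .one => ∑ j, |z j|
  | .two => Real.sqrt (∑ j, (z j) ^ 2)
  | .inf => ⨆ j, |z j|

/-- `v` is a subgradient of `z ↦ ‖z − y‖_r` at `z₀`. -/
def IsSubgradAt {n : ℕ} (r : LrIndex) (y v z₀ : Fin n → ℝ) : Prop :=
  ∀ z : Fin n → ℝ,
    lrNorm r (z₀ - y) + ∑ j, v j * (z j - z₀ j) ≤ lrNorm r (z - y)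

/-- The objective F(β) = ‖Xβ − y‖_r + λ₂‖β‖₂² + λ₁ Σᵢ |βᵢ|^q. -/
noncomputable def objF {n p : ℕ} (r : LrIndex) (X : Matrix (Fin n) (Fin p) ℝ)
    (y : Fin n → ℝ) (lam1 lam2 q : ℝ) (β : Fin p → ℝ) : ℝ :=
  lrNorm r (X.mulVec β - y) + lam2 * ∑ i, (β i) ^ 2 + lam1 * ∑ i, |β i| ^ q

/-- `β` is a generalized first-order stationary point of F. -/
def IsGenStat {n p : ℕ} (r : LrIndex) (X : Matrix (Fin n) (Fin p) ℝ)
    (y : Fin n → ℝ) (lam1 lam2 q : ℝ) (β : Fin p → ℝ) : Prop :=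
  ∃ v : Fin n → ℝ, IsSubgradAt r y v (X.mulVec β) ∧
    ∀ i : Fin p,
      β i * (∑ j, X j i * v j) + 2 * lam2 * (β i) ^ 2 + lam1 * q * |β i| ^ q = 0

/-- Weighted objective G_w(β) = ‖Xβ − y‖_r + λ₂‖β‖₂² + qλ₁ Σᵢ wᵢ|βᵢ|. -/
noncomputable def objG {n p : ℕ} (r : LrIndex) (X : Matrix (Fin n) (Fin p) ℝ)
    (y : Fin n → ℝ) (lam1 lam2 q : ℝ) (w : Fin p → ℝ) (β : Fin p → ℝ) : ℝ :=
  lrNorm r (X.mulVec β - y) + lam2 * ∑ i, (β i) ^ 2 + q * lam1 * ∑ i, w i * |β i|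

/-- The weight vector w(β) with w(β)ᵢ = u_ε if βᵢ = 0, and min(u_ε, |βᵢ|^{q−1}) otherwise. -/
noncomputable def weightVec {p : ℕ} (q uε : ℝ) (β : Fin p → ℝ) : Fin p → ℝ :=
  fun i => if β i = 0 then uε else min uε (|β i| ^ (q - 1))

theorem lrNorm_one_eq {n : ℕ} (z : Fin n → ℝ) :
    lrNorm .one z = ‖(WithLp.toLp 1 z : PiLp 1 (fun _ : Fin n => ℝ))‖ := by
  simp [lrNorm, PiLp.norm_eq_of_L1]

theorem lrNorm_two_eq {n : ℕ} (z : Fin n → ℝ) :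
    lrNorm .two z = ‖(WithLp.toLp 2 z : EuclideanSpace ℝ (Fin n))‖ := by
  simp [lrNorm, EuclideanSpace.norm_eq]

theorem lrNorm_inf_eq {n : ℕ} (z : Fin n → ℝ) :
    lrNorm .inf z = ‖(WithLp.toLp ⊤ z : PiLp ⊤ (fun _ : Fin n => ℝ))‖ := by
  simp [lrNorm, PiLp.norm_eq_ciSup]

theorem lrNorm_add {n : ℕ} (r : LrIndex) (x z : Fin n → ℝ) :
    lrNorm r (x + z) ≤ lrNorm r x + lrNorm r z := by
  cases r
  · simp only [lrNorm_one_eq, WithLp.toLp_add]; exact norm_add_le _ _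
  · simp only [lrNorm_two_eq, WithLp.toLp_add]; exact norm_add_le _ _
  · simp only [lrNorm_inf_eq, WithLp.toLp_add]; exact norm_add_le _ _

theorem lrNorm_smul {n : ℕ} (r : LrIndex) (c : ℝ) (z : Fin n → ℝ) :
    lrNorm r (c • z) = |c| * lrNorm r z := by
  cases r
  · simp only [lrNorm_one_eq, WithLp.toLp_smul, norm_smul, Real.norm_eq_abs]
  · simp only [lrNorm_two_eq, WithLp.toLp_smul, norm_smul, Real.norm_eq_abs]
  · simp only [lrNorm_inf_eq, WithLp.toLp_smul, norm_smul, Real.norm_eq_abs]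

theorem lrNorm_nonneg {n : ℕ} (r : LrIndex) (z : Fin n → ℝ) : 0 ≤ lrNorm r z := by
  cases r
  · rw [lrNorm_one_eq]; exact norm_nonneg _
  · rw [lrNorm_two_eq]; exact norm_nonneg _
  · rw [lrNorm_inf_eq]; exact norm_nonneg _

theorem lrNorm_continuous {n : ℕ} (r : LrIndex) :
    Continuous (lrNorm r : (Fin n → ℝ) → ℝ) := by
  cases r
  · simp only [funext lrNorm_one_eq]
    exact continuous_norm.comp (PiLp.continuous_toLp 1 _)
  · simp only [funext lrNorm_two_eq]
    exact continuous_norm.comp (PiLp.continuous_toLp 2 _)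
  · simp only [funext lrNorm_inf_eq]
    exact continuous_norm.comp (PiLp.continuous_toLp ⊤ _)

/-- Hahn-Banach along a linear map. -/
theorem hahn_banach_along {V E : Type*} [AddCommGroup V] [Module ℝ V] [AddCommGroup E]
    [Module ℝ E] (N : E → ℝ) (hadd : ∀ x z, N (x + z) ≤ N x + N z)
    (hsmul : ∀ (c : ℝ) z, N (c • z) = |c| * N z)
    (T : V →ₗ[ℝ] E) (f : V →ₗ[ℝ] ℝ) (hf : ∀ x, f x ≤ N (T x)) :
    ∃ g : E →ₗ[ℝ] ℝ, (∀ x, g (T x) = f x) ∧ ∀ z, g z ≤ N z := by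
  have h0 : N 0 = 0 := by simpa using hsmul 0 0
  have hmem : f ∈ LinearMap.range T.dualMap := by
    rw [LinearMap.range_dualMap_eq_dualAnnihilator_ker, Submodule.mem_dualAnnihilator]
    intro x hx
    have hx' : T x = 0 := hx
    have h1 := hf x
    have h2 := hf (-x)
    simp only [map_neg, hx', neg_zero, h0] at h1 h2
    linarith
  obtain ⟨g0, hg0⟩ := hmem
  have hg0' : ∀ x, g0 (T x) = f x := fun x => by rw [← hg0]; rfl
  obtain ⟨g, hg1, hg2⟩ := exists_extension_of_le_sublinear
    (⟨LinearMap.range T, g0.domRestrict _⟩ : E →ₗ.[ℝ] ℝ) N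
    (fun c hc x => by rw [hsmul, abs_of_pos hc]) hadd
    (by
      rintro ⟨_, x, rfl⟩
      have : g0 (T x) ≤ N (T x) := by rw [hg0']; exact hf x
      exact this)
  refine ⟨g, fun x => ?_, hg2⟩
  rw [← hg0' x]
  exact hg1 ⟨T x, x, rfl⟩

/-- The scalar variational inequality behind the reweighting scheme. -/
theorem var_ineq {q a s t : ℝ} (hq0 : 0 < q) (hq1 : q < 1) (ha : 0 < a) (hs : a ≤ s)
    (ht : 0 ≤ t) :
    q * ((max a t) ^ (q - 1) * t) + (1 - q) * (max a t) ^ q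
      ≤ q * (s ^ (q - 1) * t) + (1 - q) * s ^ q := by
  have hs0 : 0 < s := ha.trans_le hs
  have key : ∀ t : ℝ, 0 < t → q * (t ^ (q - 1) * t) + (1 - q) * t ^ q
      ≤ q * (s ^ (q - 1) * t) + (1 - q) * s ^ q := by
    intro t ht
    have e1 : t ^ (q - 1) * t = t ^ q := by
      rw [Real.rpow_sub_one ht.ne']; field_simp
    have e2 : (s ^ (q - 1) * t) ^ q * (s ^ q) ^ (1 - q) = t ^ q := by
      rw [Real.mul_rpow (by positivity) ht.le, ← Real.rpow_mul hs0.le, ← Real.rpow_mul hs0.le,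
        mul_right_comm, ← Real.rpow_add hs0]
      rw [show (q - 1) * q + q * (1 - q) = 0 by ring]; simp
    have := Real.geom_mean_le_arith_mean2_weighted hq0.le (by linarith : 0 ≤ 1 - q)
      (by positivity : 0 ≤ s ^ (q - 1) * t) (by positivity : 0 ≤ s ^ q) (by ring)
    rw [e2] at this
    rw [e1]; linarith
  rcases le_or_gt a t with h | h
  · rw [max_eq_right h]; exact key t (ha.trans_le h)
  · rw [max_eq_left h.le]
    have h1 := key a ha
    have h2 : s ^ (q - 1) ≤ a ^ (q - 1) :=
      Real.rpow_le_rpow_of_nonpos ha hs (by linarith)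
    have h3 : q * ((a ^ (q - 1) - s ^ (q - 1)) * t) ≤ q * ((a ^ (q - 1) - s ^ (q - 1)) * a) := by
      gcongr
    nlinarith

theorem weightVec_eq {p : ℕ} {q a : ℝ} (hq1 : q < 1) (ha : 0 < a) (β : Fin p → ℝ) :
    weightVec q (a ^ (q - 1)) β = fun i => (max a |β i|) ^ (q - 1) := by
  funext i
  unfold weightVec
  split_ifs with h
  · rw [h, abs_zero, max_eq_left ha.le]
  · have hb : 0 < |β i| := abs_pos.mpr h
    rcases le_total a |β i| with h1 | h1
    · rw [max_eq_right h1, min_eq_right]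
      exact Real.rpow_le_rpow_of_nonpos ha h1 (by linarith)
    · rw [max_eq_left h1, min_eq_left]
      exact Real.rpow_le_rpow_of_nonpos hb h1 (by linarith)

/-- Midpoint strong convexity at a minimizer. -/
theorem objG_gap {n p : ℕ} (r : LrIndex) (X : Matrix (Fin n) (Fin p) ℝ)
    (y : Fin n → ℝ) (lam1 lam2 q : ℝ) (hlam1 : 0 < lam1) (hq0 : 0 < q)
    (w : Fin p → ℝ) (hw : ∀ i, 0 ≤ w i) (x : Fin p → ℝ)
    (hx : ∀ β, objG r X y lam1 lam2 q w x ≤ objG r X y lam1 lam2 q w β) (z : Fin p → ℝ) :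
    objG r X y lam1 lam2 q w x + lam2 / 2 * ∑ i, (x i - z i) ^ 2
      ≤ objG r X y lam1 lam2 q w z := by
  have h := hx ((1 / 2 : ℝ) • x + (1 / 2 : ℝ) • z)
  have hN : lrNorm r (X.mulVec ((1 / 2 : ℝ) • x + (1 / 2 : ℝ) • z) - y)
      ≤ 1 / 2 * lrNorm r (X.mulVec x - y) + 1 / 2 * lrNorm r (X.mulVec z - y) := by
    have e : X.mulVec ((1 / 2 : ℝ) • x + (1 / 2 : ℝ) • z) - y
        = (1 / 2 : ℝ) • (X.mulVec x - y) + (1 / 2 : ℝ) • (X.mulVec z - y) := by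
      rw [Matrix.mulVec_add, Matrix.mulVec_smul, Matrix.mulVec_smul]
      module
    rw [e]
    refine (lrNorm_add r _ _).trans ?_
    rw [lrNorm_smul, lrNorm_smul, abs_of_pos (by norm_num : (0 : ℝ) < 1 / 2)]
  have hQ : ∑ i, (((1 / 2 : ℝ) • x + (1 / 2 : ℝ) • z) i) ^ 2
      = 1 / 2 * ∑ i, (x i) ^ 2 + 1 / 2 * ∑ i, (z i) ^ 2 - 1 / 4 * ∑ i, (x i - z i) ^ 2 := by
    simp only [Finset.mul_sum, ← Finset.sum_add_distrib, ← Finset.sum_sub_distrib]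
    refine Finset.sum_congr rfl fun i _ => ?_
    simp only [Pi.add_apply, Pi.smul_apply, smul_eq_mul]; ring
  have hW : ∑ i, w i * |((1 / 2 : ℝ) • x + (1 / 2 : ℝ) • z) i|
      ≤ 1 / 2 * ∑ i, w i * |x i| + 1 / 2 * ∑ i, w i * |z i| := by
    simp only [Finset.mul_sum, ← Finset.sum_add_distrib]
    refine Finset.sum_le_sum fun i _ => ?_
    simp only [Pi.add_apply, Pi.smul_apply, smul_eq_mul]
    have h1 : |1 / 2 * x i + 1 / 2 * z i| ≤ 1 / 2 * |x i| + 1 / 2 * |z i| := by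
      refine (abs_add_le _ _).trans ?_
      rw [abs_mul, abs_mul, abs_of_pos (by norm_num : (0 : ℝ) < 1 / 2)]
    nlinarith [mul_le_mul_of_nonneg_left h1 (hw i)]
  have hW' := mul_le_mul_of_nonneg_left hW (mul_pos hq0 hlam1).le
  unfold objG at h ⊢
  rw [hQ] at h
  nlinarith

/-- First-order conditions at a minimizer of `objG`. -/
theorem objG_foc {n p : ℕ} (r : LrIndex) (X : Matrix (Fin n) (Fin p) ℝ)
    (y : Fin n → ℝ) (lam1 lam2 q : ℝ)
    (w : Fin p → ℝ) (b : Fin p → ℝ)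
    (hb : ∀ β, objG r X y lam1 lam2 q w b ≤ objG r X y lam1 lam2 q w β) :
    ∃ v : Fin n → ℝ, IsSubgradAt r y v (X.mulVec b) ∧
      (∀ z : Fin n → ℝ, ∑ j, v j * z j ≤ lrNorm r z) ∧
      ∀ i, b i * (∑ j, X j i * v j) + 2 * lam2 * (b i) ^ 2 + q * lam1 * (w i * |b i|) = 0 := by
  set a : Fin n → ℝ := X.mulVec b - y with ha
  set c : (Fin p → ℝ) → ℝ := fun e =>
    ∑ i, (2 * lam2 * (b i) ^ 2 + q * lam1 * (w i * |b i|)) * e i with hc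
  have hcs : ∀ (t : ℝ) e, c (t • e) = t * c e := by
    intro t e
    simp only [hc, Finset.mul_sum, Pi.smul_apply, smul_eq_mul]
    exact Finset.sum_congr rfl fun i _ => by ring
  have hXs : ∀ (t : ℝ) (e : Fin p → ℝ), X.mulVec (b * (t • e)) = t • X.mulVec (b * e) := by
    intro t e; rw [mul_smul_comm, Matrix.mulVec_smul]
  -- the basic inequality
  have h1 : ∀ e : Fin p → ℝ, lrNorm r a - c e ≤ lrNorm r (X.mulVec (b * e) + a) := by
    intro e
    have hev : ∀ᶠ t in nhdsWithin (0 : ℝ) (Set.Ioi 0),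
        lrNorm r a - c e ≤ lrNorm r (X.mulVec (b * e) + a)
          + t * (lam2 * ∑ i, (b i * e i) ^ 2) := by
      have hA : ∀ᶠ t in nhdsWithin (0 : ℝ) (Set.Ioi 0), ∀ i, 0 ≤ 1 + t * e i := by
        rw [Filter.eventually_all]
        intro i
        have : Filter.Tendsto (fun t : ℝ => 1 + t * e i) (nhds 0) (nhds (1 + 0 * e i)) :=
          (Continuous.tendsto (by fun_prop) 0)
        rw [zero_mul, add_zero] at this
        exact ((this.eventually (eventually_gt_nhds zero_lt_one)).filter_mono
          nhdsWithin_le_nhds).mono fun t ht => le_of_lt ht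
      have hB : ∀ᶠ t in nhdsWithin (0 : ℝ) (Set.Ioi 0), t < 1 :=
        (eventually_lt_nhds zero_lt_one).filter_mono nhdsWithin_le_nhds
      filter_upwards [hA, hB, self_mem_nhdsWithin] with t hA hB hC
      have ht : 0 < t := hC
      have h := hb (b + t • (b * e))
      have eN : X.mulVec (b + t • (b * e)) - y
          = (1 - t) • a + t • (X.mulVec (b * e) + a) := by
        rw [Matrix.mulVec_add, Matrix.mulVec_smul, ha]; module
      have hN : lrNorm r (X.mulVec (b + t • (b * e)) - y)
          ≤ (1 - t) * lrNorm r a + t * lrNorm r (X.mulVec (b * e) + a) := by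
        rw [eN]
        refine (lrNorm_add r _ _).trans ?_
        rw [lrNorm_smul, lrNorm_smul, abs_of_pos ht, abs_of_pos (by linarith : 0 < 1 - t)]
      have hG : lam2 * ∑ i, ((b + t • (b * e)) i) ^ 2
            + q * lam1 * ∑ i, w i * |(b + t • (b * e)) i|
          = lam2 * ∑ i, (b i) ^ 2 + q * lam1 * ∑ i, w i * |b i| + t * c e
            + t * (t * (lam2 * ∑ i, (b i * e i) ^ 2)) := by
        simp only [hc, Finset.mul_sum, ← Finset.sum_add_distrib]
        refine Finset.sum_congr rfl fun i _ => ?_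
        have e1 : (b + t • (b * e)) i = b i * (1 + t * e i) := by
          simp only [Pi.add_apply, Pi.smul_apply, Pi.mul_apply, smul_eq_mul]; ring
        rw [e1, abs_mul, abs_of_nonneg (hA i)]
        ring
      unfold objG at h
      rw [← ha] at h
      have h2 : t * (lrNorm r a - c e) ≤ t * (lrNorm r (X.mulVec (b * e) + a)
          + t * (lam2 * ∑ i, (b i * e i) ^ 2)) := by linarith
      exact le_of_mul_le_mul_left h2 ht
    have hlim : Filter.Tendsto (fun t : ℝ => lrNorm r (X.mulVec (b * e) + a)
          + t * (lam2 * ∑ i, (b i * e i) ^ 2)) (nhdsWithin (0 : ℝ) (Set.Ioi 0))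
          (nhds (lrNorm r (X.mulVec (b * e) + a))) := by
      have : Filter.Tendsto (fun t : ℝ => lrNorm r (X.mulVec (b * e) + a)
          + t * (lam2 * ∑ i, (b i * e i) ^ 2)) (nhds 0)
          (nhds (lrNorm r (X.mulVec (b * e) + a) + 0 * (lam2 * ∑ i, (b i * e i) ^ 2))) :=
        Continuous.tendsto (by fun_prop) 0
      rw [zero_mul, add_zero] at this
      exact this.mono_left nhdsWithin_le_nhds
    exact ge_of_tendsto hlim hev
  -- homogenized version
  have h2 : ∀ (e : Fin p → ℝ) (s : ℝ), 0 < s →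
      s * lrNorm r a - c e ≤ lrNorm r (X.mulVec (b * e) + s • a) := by
    intro e s hs
    have h := h1 (s⁻¹ • e)
    rw [hcs, hXs] at h
    have e1 : X.mulVec (b * e) + s • a = s • (s⁻¹ • X.mulVec (b * e) + a) := by
      rw [smul_add, smul_smul, mul_inv_cancel₀ hs.ne', one_smul]
    rw [e1, lrNorm_smul, abs_of_pos hs]
    have h3 := mul_le_mul_of_nonneg_left h hs.le
    have e2 : s * (lrNorm r a - s⁻¹ * c e) = s * lrNorm r a - c e := by
      field_simp
    linarith
  have h3 : ∀ (e : Fin p → ℝ) (s : ℝ),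
      s * lrNorm r a - c e ≤ lrNorm r (X.mulVec (b * e) + s • a) := by
    intro e s
    have hp : 0 < s + (|s| + 1) := by linarith [neg_abs_le s]
    have h := h2 e _ hp
    have e1 : X.mulVec (b * e) + (s + (|s| + 1)) • a
        = (X.mulVec (b * e) + s • a) + (|s| + 1) • a := by module
    rw [e1] at h
    have h4 := lrNorm_add r (X.mulVec (b * e) + s • a) ((|s| + 1) • a)
    rw [lrNorm_smul, abs_of_pos (by positivity : 0 < |s| + 1)] at h4
    linarith
  let T : ((Fin p → ℝ) × ℝ) →ₗ[ℝ] (Fin n → ℝ) :=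
    { toFun := fun x => X.mulVec (b * x.1) + x.2 • a
      map_add' := by
        intro x z
        simp only [Prod.fst_add, Prod.snd_add, mul_add, Matrix.mulVec_add]
        module
      map_smul' := by
        intro t x
        simp only [Prod.smul_fst, Prod.smul_snd, hXs, RingHom.id_apply, smul_eq_mul]
        module }
  let f : ((Fin p → ℝ) × ℝ) →ₗ[ℝ] ℝ :=
    { toFun := fun x => x.2 * lrNorm r a - c x.1
      map_add' := by
        intro x z
        have : c (x.1 + z.1) = c x.1 + c z.1 := by
          simp only [hc, Pi.add_apply, mul_add, Finset.sum_add_distrib]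
        simp only [Prod.fst_add, Prod.snd_add, this]
        ring
      map_smul' := by
        intro t x
        simp only [Prod.smul_fst, Prod.smul_snd, hcs, RingHom.id_apply, smul_eq_mul]
        ring }
  obtain ⟨g, hg1, hg2⟩ := hahn_banach_along (lrNorm r) (lrNorm_add r) (lrNorm_smul r) T f
    (fun x => h3 x.1 x.2)
  have hgv : ∀ z, g z = ∑ j, g (Pi.single j 1) * z j := by
    intro z
    conv_lhs => rw [LinearMap.pi_apply_eq_sum_univ g z]
    refine Finset.sum_congr rfl fun j _ => ?_
    rw [smul_eq_mul, mul_comm]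
    congr 2
    funext k
    simp [Pi.single_apply, eq_comm]
  refine ⟨fun j => g (Pi.single j 1), ?_, ?_, ?_⟩
  · intro z
    have e1 : g a = lrNorm r a := by
      have := hg1 (0, 1)
      simpa [T, f, hc] using this
    have e2 : ∑ j, g (Pi.single j 1) * (z j - X.mulVec b j) = g (z - X.mulVec b) := by
      rw [hgv (z - X.mulVec b)]; rfl
    simp only [e2]
    rw [← ha, ← e1, ← map_add]
    have e3 : a + (z - X.mulVec b) = z - y := by rw [ha]; abel
    rw [e3]
    exact hg2 _
  · intro z
    simp only [← hgv]
    exact hg2 z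
  · intro i
    have h := hg1 (Pi.single i 1, 0)
    have e1 : T (Pi.single i 1, 0) = b i • (fun j => X j i) := by
      have : b * Pi.single i (1 : ℝ) = b i • Pi.single i (1 : ℝ) := by
        funext k
        by_cases hk : k = i
        · subst hk; simp
        · simp [hk]
      simp only [T, LinearMap.coe_mk, AddHom.coe_mk, zero_smul, add_zero, this,
        Matrix.mulVec_smul, Matrix.mulVec_single_one]
      rfl
    have e2 : f (Pi.single i 1, 0) = - (2 * lam2 * (b i) ^ 2 + q * lam1 * (w i * |b i|)) := by
      simp [f, hc, Pi.single_apply]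
    rw [e1, e2, map_smul, smul_eq_mul, hgv] at h
    have e3 : ∑ j, X j i * g (Pi.single j 1) = ∑ j, g (Pi.single j 1) * X j i :=
      Finset.sum_congr rfl fun j _ => mul_comm _ _
    simp only [e3]
    linarith

/-- Successive differences vanish under a descent inequality. -/
theorem descent_tendsto (E d : ℕ → ℝ) (hE : ∀ k, 0 ≤ E k) (hd : ∀ k, 0 ≤ d k) (c : ℝ)
    (hc : 0 < c) (h : ∀ k, E (k + 1) + c * d k ≤ E k) :
    Filter.Tendsto d Filter.atTop (nhds 0) := by
  have hanti : Antitone E := antitone_nat_of_succ_le fun k => by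
    have := h k
    have := mul_nonneg hc.le (hd k)
    linarith
  have hl := tendsto_atTop_ciInf hanti ⟨0, by rintro _ ⟨k, rfl⟩; exact hE k⟩
  have hl' := hl.comp (Filter.tendsto_add_atTop_nat 1)
  have hs := (hl.sub hl').const_mul c⁻¹
  rw [sub_self, mul_zero] at hs
  refine squeeze_zero hd (fun k => ?_) hs
  have := h k
  simp only [Function.comp]
  rw [inv_mul_eq_div, le_div_iff₀ hc]
  linarith

/-- any accumulation point of the iterative reweighted sequence is a
generalized first-order stationary point of F, with the lower bound on its
nonzero entries. -/
theorem reweighted_accumulation_stationary {n p : ℕ} (hn : 0 < n) (hp : 0 < p)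
    (r : LrIndex) (X : Matrix (Fin n) (Fin p) ℝ) (y : Fin n → ℝ)
    (lam1 lam2 q ε : ℝ) (hlam1 : 0 < lam1) (hlam2 : 0 < lam2)
    (hq0 : 0 < q) (hq1 : q < 1)
    (hX : ∀ i : Fin p, (fun j => X j i) ≠ (0 : Fin n → ℝ))
    (hε : 0 < ε)
    (hεb : ∀ i : Fin p,
      ε < (p : ℝ) * lam1 * (lrNorm r (fun j => X j i) / (q * lam1)) ^ (q / (q - 1)))
    (βseq : ℕ → Fin p → ℝ)
    (hseq : ∀ k : ℕ, ∀ β : Fin p → ℝ,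
      objG r X y lam1 lam2 q
          (weightVec q ((ε / (p * lam1)) ^ ((q - 1) / q)) (βseq k)) (βseq (k + 1))
        ≤ objG r X y lam1 lam2 q
          (weightVec q ((ε / (p * lam1)) ^ ((q - 1) / q)) (βseq k)) β)
    (βbar : Fin p → ℝ) (ks : ℕ → ℕ) (hks : StrictMono ks)
    (hconv : Filter.Tendsto (fun j => βseq (ks j)) Filter.atTop (nhds βbar)) :
    IsGenStat r X y lam1 lam2 q βbar ∧
    ∀ i : Fin p, βbar i ≠ 0 →
      (q * lam1 / lrNorm r (fun j => X j i)) ^ (1 / (1 - q)) < |βbar i| := by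
  have hp' : (0 : ℝ) < p := by exact_mod_cast hp
  have hpl : 0 < (p : ℝ) * lam1 := by positivity
  have hep : 0 < ε / (p * lam1) := by positivity
  set a : ℝ := (ε / (p * lam1)) ^ (1 / q) with ha_def
  have ha : 0 < a := Real.rpow_pos_of_pos hep _
  have hu : (ε / (p * lam1)) ^ ((q - 1) / q) = a ^ (q - 1) := by
    rw [ha_def, ← Real.rpow_mul hep.le]; congr 1; ring
  rw [hu] at hseq
  simp only [weightVec_eq hq1 ha] at hseq
  have hwpos : ∀ t : ℝ, 0 < (max a |t|) ^ (q - 1) := fun t =>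
    Real.rpow_pos_of_pos (lt_max_of_lt_left ha) _
  set W : (Fin p → ℝ) → Fin p → ℝ := fun β i => (max a |β i|) ^ (q - 1) with hW
  -- energy
  set E : ℕ → ℝ := fun k => objG r X y lam1 lam2 q (W (βseq k)) (βseq k)
    + lam1 * ∑ i, (1 - q) * (max a |βseq k i|) ^ q with hE
  have hEnn : ∀ k, 0 ≤ E k := by
    intro k
    have h1 : 0 ≤ ∑ i, (1 - q) * (max a |βseq k i|) ^ q := Finset.sum_nonneg fun i _ =>
      mul_nonneg (by linarith) (Real.rpow_nonneg (le_max_of_le_left ha.le) _)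
    have h2 : 0 ≤ ∑ i, W (βseq k) i * |βseq k i| := Finset.sum_nonneg fun i _ =>
      mul_nonneg (hwpos _).le (abs_nonneg _)
    have h3 : 0 ≤ ∑ i, (βseq k i) ^ 2 := Finset.sum_nonneg fun i _ => sq_nonneg _
    have h4 := lrNorm_nonneg r (X.mulVec (βseq k) - y)
    simp only [hE, objG]
    positivity
  have hdesc : ∀ k, E (k + 1) + lam2 / 2 * ∑ i, (βseq (k + 1) i - βseq k i) ^ 2 ≤ E k := by
    intro k
    have h1 := objG_gap r X y lam1 lam2 q hlam1 hq0 (W (βseq k)) (fun i => (hwpos _).le)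
      (βseq (k + 1)) (hseq k) (βseq k)
    have h2 : ∑ i, (q * (W (βseq (k + 1)) i * |βseq (k + 1) i|)
          + (1 - q) * (max a |βseq (k + 1) i|) ^ q)
        ≤ ∑ i, (q * (W (βseq k) i * |βseq (k + 1) i|) + (1 - q) * (max a |βseq k i|) ^ q) :=
      Finset.sum_le_sum fun i _ => var_ineq hq0 hq1 ha (le_max_left _ _) (abs_nonneg _)
    rw [Finset.sum_add_distrib, Finset.sum_add_distrib, ← Finset.mul_sum (a := q),
      ← Finset.mul_sum (a := q)] at h2
    have h3 := mul_le_mul_of_nonneg_left h2 hlam1.le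
    simp only [hE]
    simp only [objG] at h1 ⊢
    linarith
  have hd0 := descent_tendsto E (fun k => ∑ i, (βseq (k + 1) i - βseq k i) ^ 2) hEnn
    (fun k => Finset.sum_nonneg fun i _ => sq_nonneg _) (lam2 / 2) (by positivity) hdesc
  have hdi : ∀ i, Filter.Tendsto (fun k => βseq (k + 1) i - βseq k i) Filter.atTop (nhds 0) := by
    intro i
    have h1 : Filter.Tendsto (fun k => (βseq (k + 1) i - βseq k i) ^ 2) Filter.atTop (nhds 0) :=
      squeeze_zero (fun k => sq_nonneg _) (fun k => Finset.single_le_sum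
        (f := fun i => (βseq (k + 1) i - βseq k i) ^ 2) (fun i _ => sq_nonneg _)
        (Finset.mem_univ i)) hd0
    have h2 := h1.sqrt
    simp only [Real.sqrt_sq_eq_abs, Real.sqrt_zero] at h2
    exact (tendsto_zero_iff_abs_tendsto_zero _).mpr h2
  have hconv' : Filter.Tendsto (fun j => βseq (ks j + 1)) Filter.atTop (nhds βbar) := by
    rw [tendsto_pi_nhds] at hconv ⊢
    intro i
    have h := ((hdi i).comp hks.tendsto_atTop).add (hconv i)
    simpa [Function.comp_def] using h
  -- joint continuity
  have hWc : ∀ i, Continuous fun x : Fin p → ℝ => (max a |x i|) ^ (q - 1) := by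
    intro i
    refine Continuous.rpow_const (by fun_prop) fun x => Or.inl ?_
    exact (lt_max_of_lt_left ha).ne'
  have hGc : Continuous fun x : (Fin p → ℝ) × (Fin p → ℝ) =>
      objG r X y lam1 lam2 q (W x.1) x.2 := by
    unfold objG
    have hN : Continuous fun x : (Fin p → ℝ) × (Fin p → ℝ) => lrNorm r (X.mulVec x.2 - y) := by
      refine (lrNorm_continuous r).comp ?_
      exact (Continuous.matrix_mulVec continuous_const continuous_snd).sub continuous_const
    have hS : Continuous fun x : (Fin p → ℝ) × (Fin p → ℝ) => ∑ i, W x.1 i * |x.2 i| := by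
      refine continuous_finsetSum _ fun i _ => ?_
      exact ((hWc i).comp continuous_fst).mul (by fun_prop)
    exact (hN.add (by fun_prop)).add (continuous_const.mul hS)
  have hmin : ∀ β, objG r X y lam1 lam2 q (W βbar) βbar ≤ objG r X y lam1 lam2 q (W βbar) β := by
    intro β
    have t1 := (hGc.tendsto (βbar, βbar)).comp (hconv.prodMk_nhds hconv')
    have t2 := (hGc.tendsto (βbar, β)).comp (hconv.prodMk_nhds (tendsto_const_nhds (x := β)))
    exact le_of_tendsto_of_tendsto' t1 t2 fun j => hseq (ks j) β
  obtain ⟨v, hv1, hv2, hv3⟩ := objG_foc r X y lam1 lam2 q (W βbar) βbar hmin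
  have hlow : ∀ i, βbar i ≠ 0 → W βbar i = |βbar i| ^ (q - 1) ∧
      (q * lam1 / lrNorm r (fun j => X j i)) ^ (1 / (1 - q)) < |βbar i| := by
    intro i hi
    set L := lrNorm r (fun j => X j i) with hL
    have hql : 0 < q * lam1 := by positivity
    have hbp : 0 < |βbar i| := abs_pos.mpr hi
    have hLpos : 0 < L := by
      rcases (lrNorm_nonneg r (fun j => X j i)).lt_or_eq with h | h
      · exact h
      · exfalso
        have h1 := hεb i
        rw [← h, zero_div, Real.zero_rpow (div_ne_zero hq0.ne' (by linarith)), mul_zero] at h1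
        linarith
    have hLq : 0 < L / (q * lam1) := by positivity
    -- the weight is small
    have hwlt : W βbar i < L / (q * lam1) := by
      have h1 := hv2 ((-βbar i) • fun j => X j i)
      rw [lrNorm_smul, abs_neg, ← hL] at h1
      have h2 : ∑ j, v j * ((-βbar i) • fun j => X j i) j = -(βbar i * ∑ j, X j i * v j) := by
        rw [Finset.mul_sum, ← Finset.sum_neg_distrib]
        refine Finset.sum_congr rfl fun j _ => ?_
        simp only [Pi.smul_apply, smul_eq_mul]; ring
      rw [h2] at h1
      have h3 := hv3 i
      have h4 : 0 < 2 * lam2 * (βbar i) ^ 2 := by positivity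
      have h5 : |βbar i| * (q * lam1 * W βbar i) < |βbar i| * L := by nlinarith
      have h6 := lt_of_mul_lt_mul_left h5 hbp.le
      rw [lt_div_iff₀ hql]; linarith
    -- the cap exceeds it
    have hcap : L / (q * lam1) < a ^ (q - 1) := by
      have h1 : ε / (p * lam1) < (L / (q * lam1)) ^ (q / (q - 1)) := by
        rw [div_lt_iff₀ hpl]; linarith [hεb i]
      have h2 := Real.rpow_lt_rpow_of_neg hep h1
        (div_neg_of_neg_of_pos (by linarith) hq0 : (q - 1) / q < 0)
      rw [← Real.rpow_mul hLq.le, hu] at h2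
      have h3 : q / (q - 1) * ((q - 1) / q) = 1 := by
        have : q - 1 ≠ 0 := by linarith
        field_simp
      rwa [h3, Real.rpow_one] at h2
    have hab : a ≤ |βbar i| := by
      by_contra hcon
      push Not at hcon
      have : W βbar i = a ^ (q - 1) := by simp only [hW]; rw [max_eq_left hcon.le]
      linarith
    have hWi : W βbar i = |βbar i| ^ (q - 1) := by simp only [hW]; rw [max_eq_right hab]
    refine ⟨hWi, ?_⟩
    rw [hWi] at hwlt
    have h1 := Real.rpow_lt_rpow_of_neg (Real.rpow_pos_of_pos hbp _) hwlt
      (div_neg_of_pos_of_neg one_pos (by linarith) : 1 / (q - 1) < 0)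
    rw [← Real.rpow_mul hbp.le, mul_one_div_cancel (by linarith : q - 1 ≠ 0), Real.rpow_one] at h1
    have h2 : (q * lam1 / L) ^ (1 / (1 - q)) = (L / (q * lam1)) ^ (1 / (q - 1)) := by
      rw [← inv_div L (q * lam1), Real.inv_rpow hLq.le, ← Real.rpow_neg hLq.le]
      congr 1
      rw [← neg_sub q 1, div_neg, neg_neg]
    rw [h2]; exact h1
  refine ⟨⟨v, hv1, fun i => ?_⟩, fun i hi => (hlow i hi).2⟩
  by_cases hi : βbar i = 0
  · rw [hi, abs_zero, Real.zero_rpow hq0.ne']; ring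
  · have h := hv3 i
    have hbp : 0 < |βbar i| := abs_pos.mpr hi
    have e : |βbar i| ^ (q - 1) * |βbar i| = |βbar i| ^ q := by
      rw [Real.rpow_sub_one hbp.ne']; field_simp
    rw [(hlow i hi).1, e] at h
    linarith
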